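/- With $\hat H_2$ as in the context, fix $\Lambda_1$ with $1 < \Lambda_1 < \Lambda_2$, set $c = -\frac{1}{2\Lambda_1^2} - \Lambda_1$ and $\Lambda_{\max} = \Lambda_3 + \sqrt{2(c-B)}$ (which is well defined since $c > B$). Then: (i) $\hat H_2(\Lambda_1) = c = \hat H_2(\Lambda_{\max})$ and $\hat H_2(y) < c$ for all $y \in (\Lambda_1, \Lambda_{\max})$; (ii) if $y : \mathbb{R} \to (\Lambda_1,\Lambda_{\max})$ is differentiable and strictly increasing with $\lim_{s\to-\infty} y(s) = \Lambda_1$, $\lim_{s\to+\infty} y(s) = \Lambda_{\max}$, and $s_0 \in \mathbb{R}$ satisfies $y(s_0) = \Lambda_3$, then the function $r(s) = \sqrt{2(c - \hat H_2(y(s)))}$ is positive, strictly increasing on $(-\infty, s_0]$, strictly decreasing on $[s_0,\infty)$, and $r(s) \to 0$ as $s \to \pm\infty$. -/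

import Mathlib

open Filter

/-- The interpolated function `Ĥ₂(y) = (1 - f(y))(-1/(2y²) - y) + f(y)(½(y-Λ₃)² + B)`
from the appendix of the paper. -/
noncomputable def H2hat (Λ3 B : ℝ) (f : ℝ → ℝ) (y : ℝ) : ℝ :=
  (1 - f y) * (-(1 / (2 * y ^ 2)) - y) + f y * ((y - Λ3) ^ 2 / 2 + B)

/-!
Both branches of `H2hat` decrease strictly from `Λ1` up to `Λ3`. On the transition interval the
cutoff moves weight from the upper branch to the lower one, which can only decrease the value
further, so `H2hat` decreases strictly on `[Λ1, Λ3]`; beyond `Λ3` it is the increasing half of a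
parabola, which returns to the level `c` at `Λmax`. The radius is a strictly decreasing function of
the energy, so along an increasing trajectory it grows until `Λ3` and shrinks afterwards. It
vanishes at both ends because the cutoff is locally constant near `Λ1` and `Λmax`, which makes
`H2hat` continuous there.
-/

open Set Topology

/-- The radius forced by the energy relation `r ^ 2 / 2 + e = c`, as a function of the potential
energy `e`; it is `0` by convention of `Real.sqrt` when `c < e`. -/
noncomputable def energyRadius (c e : ℝ) : ℝ := √(2 * (c - e))

lemma energyRadius_pos {c e : ℝ} (he : e < c) : 0 < energyRadius c e :=
  Real.sqrt_pos.2 (by linarith)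

lemma strictAntiOn_energyRadius (c : ℝ) : StrictAntiOn (energyRadius c) (Iic c) :=
  fun _ _ e' he' hlt ↦ Real.sqrt_lt_sqrt (by linarith [mem_Iic.1 he']) (by linarith)

lemma tendsto_energyRadius_zero {ι : Type*} {l : Filter ι} {U : ι → ℝ} {c : ℝ}
    (hU : Tendsto U l (𝓝 c)) : Tendsto (fun s ↦ energyRadius c (U s)) l (𝓝 0) := by
  simpa [energyRadius] using ((hU.const_sub c).const_mul 2).sqrt

lemma lt_of_strictAntiOn_of_strictMonoOn {α β : Type*} [LinearOrder α] [Preorder β]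
    {U : α → β} {l p m x : α} {c : β} (hanti : StrictAntiOn U (Icc l p))
    (hmono : StrictMonoOn U (Icc p m)) (hl : U l = c) (hm : U m = c) (hx : x ∈ Ioo l m) :
    U x < c := by
  rcases le_total x p with hxp | hpx
  · exact hl ▸ hanti ⟨le_rfl, hx.1.le.trans hxp⟩ ⟨hx.1.le, hxp⟩ hx.1
  · exact hm ▸ hmono ⟨hpx, hx.2.le⟩ ⟨hpx.trans hx.2.le, le_rfl⟩ hx.2

section Trajectory

variable {ι α : Type*} [PartialOrder ι] [Preorder α] {U : α → ℝ} {l p m : α} {c : ℝ}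
  {y : ι → α} {s0 : ι}

lemma strictMonoOn_energyRadius_comp (hU : StrictAntiOn U (Icc l p))
    (hlt : ∀ x ∈ Ioo l m, U x < c) (hy : ∀ s, y s ∈ Ioo l m) (hymono : StrictMono y)
    (hs0 : y s0 = p) : StrictMonoOn (fun s ↦ energyRadius c (U (y s))) (Iic s0) := by
  have hUy : StrictAntiOn (fun s ↦ U (y s)) (Iic s0) :=
    hU.comp_strictMonoOn (hymono.strictMonoOn _)
      fun s hs ↦ ⟨(hy s).1.le, hs0 ▸ hymono.monotone hs⟩
  exact (strictAntiOn_energyRadius c).comp hUy fun s _ ↦ (hlt _ (hy s)).le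

lemma strictAntiOn_energyRadius_comp (hU : StrictMonoOn U (Icc p m))
    (hlt : ∀ x ∈ Ioo l m, U x < c) (hy : ∀ s, y s ∈ Ioo l m) (hymono : StrictMono y)
    (hs0 : y s0 = p) : StrictAntiOn (fun s ↦ energyRadius c (U (y s))) (Ici s0) := by
  have hUy : StrictMonoOn (fun s ↦ U (y s)) (Ici s0) :=
    hU.comp (hymono.strictMonoOn _)
      fun s hs ↦ ⟨hs0 ▸ hymono.monotone hs, (hy s).2.le⟩
  exact (strictAntiOn_energyRadius c).comp_strictMonoOn hUy fun s _ ↦ (hlt _ (hy s)).le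

end Trajectory

lemma strictAntiOn_convexCombination {α R : Type*} [Preorder α] [CommRing R] [PartialOrder R]
    [IsStrictOrderedRing R] {s : Set α} {g h w : α → R}
    (hg : StrictAntiOn g s) (hh : StrictAntiOn h s) (hw : MonotoneOn w s)
    (hw01 : MapsTo w s (Icc 0 1)) (hle : ∀ x ∈ s, h x ≤ g x) :
    StrictAntiOn (fun x ↦ (1 - w x) * g x + w x * h x) s := by
  intro x hx y hy hxy
  have hgxy := hg hx hy hxy
  have hhxy := hh hx hy hxy
  obtain ⟨hwy0, hwy1⟩ := hw01 hy
  calc (1 - w y) * g y + w y * h y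
      < (1 - w y) * g x + w y * h x := by
        rcases hwy0.eq_or_lt with hwy | hwy
        · simpa [← hwy] using hgxy
        · exact add_lt_add_of_le_of_lt
            (mul_le_mul_of_nonneg_left hgxy.le (sub_nonneg.2 hwy1))
            (mul_lt_mul_of_pos_left hhxy hwy)
    _ = g x - w y * (g x - h x) := by ring
    _ ≤ g x - w x * (g x - h x) :=
        sub_le_sub_left
          (mul_le_mul_of_nonneg_right (hw hx hy hxy.le) (sub_nonneg.2 (hle x hx))) _
    _ = (1 - w x) * g x + w x * h x := by ring

/-- The function `H₂(y) = -1/(2y²) - y`, the branch of `H2hat` where the cutoff vanishes. -/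
noncomputable def H2 (y : ℝ) : ℝ := -(1 / (2 * y ^ 2)) - y

/-- The parabola `V(y) = ½(y - Λ₃)² + B`, the branch of `H2hat` where the cutoff equals `1`. -/
noncomputable def quadraticWell (Λ3 B y : ℝ) : ℝ := (y - Λ3) ^ 2 / 2 + B

lemma hasDerivAt_H2 {y : ℝ} (hy : y ≠ 0) : HasDerivAt H2 (1 / y ^ 3 - 1) y := by
  have hderiv : HasDerivAt (fun z : ℝ ↦ -(2 * z ^ 2)⁻¹ - z)
      (-(-(2 * (2 * y)) / (2 * y ^ 2) ^ 2) - 1) y := by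
    have hpow := ((hasDerivAt_pow 2 y).const_mul 2).fun_inv (by positivity)
    simpa using hpow.fun_neg.fun_sub (hasDerivAt_id' y)
  convert hderiv using 1
  · ext z
    rw [H2, one_div]
  · field_simp

lemma strictAntiOn_H2 : StrictAntiOn H2 (Ici 1) := by
  have hderiv : ∀ y ∈ Ici (1 : ℝ), HasDerivAt H2 (1 / y ^ 3 - 1) y := fun y hy ↦
    hasDerivAt_H2 (zero_lt_one.trans_le hy).ne'
  refine strictAntiOn_of_deriv_neg (convex_Ici 1)
    (fun y hy ↦ (hderiv y hy).continuousAt.continuousWithinAt) fun y hy ↦ ?_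
  rw [interior_Ici, mem_Ioi] at hy
  rw [(hderiv y hy.le).deriv, sub_neg, one_div]
  exact inv_lt_one_of_one_lt₀ (one_lt_pow₀ hy three_ne_zero)

lemma strictAntiOn_quadraticWell (Λ3 B : ℝ) : StrictAntiOn (quadraticWell Λ3 B) (Iic Λ3) := by
  intro x _ y hy hxy
  have hsq : (Λ3 - y) ^ 2 < (Λ3 - x) ^ 2 :=
    pow_lt_pow_left₀ (sub_lt_sub_left hxy _) (sub_nonneg.2 hy) two_ne_zero
  simp only [quadraticWell]
  linarith

lemma strictMonoOn_quadraticWell (Λ3 B : ℝ) : StrictMonoOn (quadraticWell Λ3 B) (Ici Λ3) := by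
  intro x hx y _ hxy
  have hsq : (x - Λ3) ^ 2 < (y - Λ3) ^ 2 :=
    pow_lt_pow_left₀ (sub_lt_sub_right hxy _) (sub_nonneg.2 hx) two_ne_zero
  simp only [quadraticWell]
  linarith

lemma continuous_quadraticWell (Λ3 B : ℝ) : Continuous (quadraticWell Λ3 B) := by
  unfold quadraticWell
  fun_prop

lemma quadraticWell_add_sqrt {B c : ℝ} (Λ3 : ℝ) (hBc : B ≤ c) :
    quadraticWell Λ3 B (Λ3 + √(2 * (c - B))) = c := by
  rw [quadraticWell, add_sub_cancel_left, Real.sq_sqrt (by linarith)]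
  ring

section Cutoff

variable {Λ1 Λ3 B a b : ℝ} {f : ℝ → ℝ}

lemma eqOn_H2hat_H2 (hf0 : ∀ y ≤ a, f y = 0) : EqOn (H2hat Λ3 B f) H2 (Iic a) := by
  intro y hy
  simp [H2hat, H2, hf0 y hy]

lemma eqOn_H2hat_quadraticWell (hf1 : ∀ y, b ≤ y → f y = 1) :
    EqOn (H2hat Λ3 B f) (quadraticWell Λ3 B) (Ici b) := by
  intro y hy
  simp [H2hat, quadraticWell, hf1 y hy]

lemma continuousAt_H2hat_of_lt {y : ℝ} (hy0 : y ≠ 0) (hya : y < a) (hf0 : ∀ y ≤ a, f y = 0) :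
    ContinuousAt (H2hat Λ3 B f) y :=
  (hasDerivAt_H2 hy0).continuousAt.congr
    ((eqOn_H2hat_H2 hf0).eventuallyEq_of_mem (Iic_mem_nhds hya)).symm

lemma continuousAt_H2hat_of_gt {y : ℝ} (hby : b < y) (hf1 : ∀ y, b ≤ y → f y = 1) :
    ContinuousAt (H2hat Λ3 B f) y :=
  (continuous_quadraticWell Λ3 B).continuousAt.congr
    ((eqOn_H2hat_quadraticWell hf1).eventuallyEq_of_mem (Ici_mem_nhds hby)).symm

lemma strictAntiOn_H2hat_transition (ha : 1 ≤ a) (hab : a ≤ b) (hbΛ3 : b ≤ Λ3)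
    (hVH : ∀ y ∈ Icc a b, quadraticWell Λ3 B y ≤ H2 y) (hfmono : MonotoneOn f (Icc a b))
    (hfa : f a = 0) (hfb : f b = 1) : StrictAntiOn (H2hat Λ3 B f) (Icc a b) :=
  strictAntiOn_convexCombination
    (strictAntiOn_H2.mono fun _ hy ↦ ha.trans hy.1)
    ((strictAntiOn_quadraticWell Λ3 B).mono fun _ hy ↦ hy.2.trans hbΛ3)
    hfmono
    (fun _ hy ↦ ⟨hfa ▸ hfmono (left_mem_Icc.2 hab) hy hy.1,
      hfb ▸ hfmono hy (right_mem_Icc.2 hab) hy.2⟩)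
    hVH

lemma strictAntiOn_H2hat (hΛ1 : 1 ≤ Λ1) (hΛ1a : Λ1 ≤ a) (hab : a ≤ b) (hbΛ3 : b ≤ Λ3)
    (hVH : ∀ y ∈ Icc a b, quadraticWell Λ3 B y ≤ H2 y) (hfmono : MonotoneOn f (Icc a b))
    (hf0 : ∀ y ≤ a, f y = 0) (hf1 : ∀ y, b ≤ y → f y = 1) :
    StrictAntiOn (H2hat Λ3 B f) (Icc Λ1 Λ3) := by
  have hleft : StrictAntiOn (H2hat Λ3 B f) (Icc Λ1 a) :=
    (strictAntiOn_H2.mono fun _ hy ↦ hΛ1.trans hy.1).congr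
      ((eqOn_H2hat_H2 hf0).mono Icc_subset_Iic_self).symm
  have hmiddle : StrictAntiOn (H2hat Λ3 B f) (Icc a b) :=
    strictAntiOn_H2hat_transition (hΛ1.trans hΛ1a) hab hbΛ3 hVH hfmono (hf0 a le_rfl)
      (hf1 b le_rfl)
  have hright : StrictAntiOn (H2hat Λ3 B f) (Icc b Λ3) :=
    ((strictAntiOn_quadraticWell Λ3 B).mono Icc_subset_Iic_self).congr
      ((eqOn_H2hat_quadraticWell hf1).mono Icc_subset_Ici_self).symm
  have hleft_middle := hleft.union hmiddle (isGreatest_Icc hΛ1a) (isLeast_Icc hab)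
  rw [Icc_union_Icc_eq_Icc hΛ1a hab] at hleft_middle
  have hall := hleft_middle.union hright (isGreatest_Icc (hΛ1a.trans hab)) (isLeast_Icc hbΛ3)
  rwa [Icc_union_Icc_eq_Icc (hΛ1a.trans hab) hbΛ3] at hall

lemma strictMonoOn_H2hat (hbΛ3 : b ≤ Λ3) (hf1 : ∀ y, b ≤ y → f y = 1) :
    StrictMonoOn (H2hat Λ3 B f) (Ici Λ3) :=
  (strictMonoOn_quadraticWell Λ3 B).congr
    ((eqOn_H2hat_quadraticWell hf1).mono (Ici_subset_Ici.2 hbΛ3)).symm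

lemma H2hat_center (hbΛ3 : b ≤ Λ3) (hf1 : ∀ y, b ≤ y → f y = 1) : H2hat Λ3 B f Λ3 = B := by
  simp [H2hat, hf1 Λ3 hbΛ3]

end Cutoff

theorem stmt_18_general {ι : Type*} [PartialOrder ι] {Λ1 a b Λ3 B c Λmax : ℝ} {f : ℝ → ℝ}
    (hΛ1 : 1 ≤ Λ1) (hΛ1a : Λ1 < a) (hab : a ≤ b) (hbΛ3 : b ≤ Λ3)
    (hVH : ∀ y ∈ Icc a b, quadraticWell Λ3 B y ≤ H2 y) (hfmono : MonotoneOn f (Icc a b))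
    (hf0 : ∀ y ≤ a, f y = 0) (hf1 : ∀ y, b ≤ y → f y = 1)
    (hc : c = H2 Λ1) (hΛmax : Λmax = Λ3 + √(2 * (c - B))) :
    (H2hat Λ3 B f Λ1 = c ∧ H2hat Λ3 B f Λmax = c ∧ ∀ y ∈ Ioo Λ1 Λmax, H2hat Λ3 B f y < c) ∧
    ∀ y : ι → ℝ, (∀ s, y s ∈ Ioo Λ1 Λmax) → StrictMono y →
      Tendsto y atBot (𝓝 Λ1) → Tendsto y atTop (𝓝 Λmax) →
      ∀ s0, y s0 = Λ3 →
        (∀ s, 0 < energyRadius c (H2hat Λ3 B f (y s))) ∧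
        StrictMonoOn (fun s ↦ energyRadius c (H2hat Λ3 B f (y s))) (Iic s0) ∧
        StrictAntiOn (fun s ↦ energyRadius c (H2hat Λ3 B f (y s))) (Ici s0) ∧
        Tendsto (fun s ↦ energyRadius c (H2hat Λ3 B f (y s))) atBot (𝓝 0) ∧
        Tendsto (fun s ↦ energyRadius c (H2hat Λ3 B f (y s))) atTop (𝓝 0) := by
  have hanti := strictAntiOn_H2hat hΛ1 hΛ1a.le hab hbΛ3 hVH hfmono hf0 hf1
  have hmono : StrictMonoOn (H2hat Λ3 B f) (Icc Λ3 Λmax) :=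
    (strictMonoOn_H2hat hbΛ3 hf1).mono Icc_subset_Ici_self
  have hleft : H2hat Λ3 B f Λ1 = c := (eqOn_H2hat_H2 hf0 hΛ1a.le).trans hc.symm
  have hΛ13 : Λ1 < Λ3 := hΛ1a.trans_le (hab.trans hbΛ3)
  have hBc : B < c := calc
    B = H2hat Λ3 B f Λ3 := (H2hat_center hbΛ3 hf1).symm
    _ < H2hat Λ3 B f Λ1 := hanti (left_mem_Icc.2 hΛ13.le) (right_mem_Icc.2 hΛ13.le) hΛ13
    _ = c := hleft
  have hΛ3max : Λ3 < Λmax := hΛmax ▸ lt_add_of_pos_right _ (Real.sqrt_pos.2 (by linarith))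
  have hright : H2hat Λ3 B f Λmax = c := by
    rw [eqOn_H2hat_quadraticWell hf1 (hbΛ3.trans hΛ3max.le), hΛmax,
      quadraticWell_add_sqrt Λ3 hBc.le]
  have hlt : ∀ y ∈ Ioo Λ1 Λmax, H2hat Λ3 B f y < c := fun _ ↦
    lt_of_strictAntiOn_of_strictMonoOn hanti hmono hleft hright
  refine ⟨⟨hleft, hright, hlt⟩, fun y hy hymono hbot htop s0 hs0 ↦
    ⟨fun s ↦ energyRadius_pos (hlt _ (hy s)),
      strictMonoOn_energyRadius_comp hanti hlt hy hymono hs0,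
      strictAntiOn_energyRadius_comp hmono hlt hy hymono hs0,
      tendsto_energyRadius_zero ?_, tendsto_energyRadius_zero ?_⟩⟩
  · exact hleft ▸ (continuousAt_H2hat_of_lt (by positivity) hΛ1a hf0).tendsto.comp hbot
  · exact hright ▸ (continuousAt_H2hat_of_gt (hbΛ3.trans_lt hΛ3max) hf1).tendsto.comp htop

/-- Appendix of the paper: with `c = -1/(2Λ₁²) - Λ₁` and `Λ_max = Λ₃ + √(2(c-B))`:
(i) `Ĥ₂(Λ₁) = c = Ĥ₂(Λ_max)` and `Ĥ₂ < c` on `(Λ₁, Λ_max)`; (ii) for every strictly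
increasing differentiable `y : ℝ → (Λ₁, Λ_max)` tending to `Λ₁` at `-∞` and `Λ_max` at
`+∞`, and `s₀` with `y(s₀) = Λ₃`, the radius `r(s) = √(2(c - Ĥ₂(y(s))))` is positive,
strictly increasing on `(-∞, s₀]`, strictly decreasing on `[s₀, ∞)`, and tends to `0`
at `±∞`. -/
theorem stmt_18 (Λ1 Λ2 Λ3 ε B c Λmax : ℝ) (f : ℝ → ℝ)
    (hΛ2 : 1 < Λ2) (hΛ23 : Λ2 < Λ3)
    (hε : 0 < ε) (hε' : ε < (Λ3 - Λ2) / 2)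
    (hB : ∀ y ∈ Set.Icc (Λ2 + ε) (Λ2 + 2 * ε),
      (y - Λ3) ^ 2 / 2 + B + 1 / (2 * y ^ 2) + y ≤ 0)
    (hf : ContDiff ℝ (⊤ : ℕ∞) f) (hfmono : Monotone f)
    (hfrange : ∀ y, f y ∈ Set.Icc (0 : ℝ) 1)
    (hf0 : ∀ y, y ≤ Λ2 + ε → f y = 0)
    (hf1 : ∀ y, Λ2 + 2 * ε ≤ y → f y = 1)
    (hΛ1 : 1 < Λ1) (hΛ12 : Λ1 < Λ2)
    (hc : c = -(1 / (2 * Λ1 ^ 2)) - Λ1)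
    (hΛmax : Λmax = Λ3 + Real.sqrt (2 * (c - B))) :
    (H2hat Λ3 B f Λ1 = c ∧ H2hat Λ3 B f Λmax = c ∧
      ∀ y ∈ Set.Ioo Λ1 Λmax, H2hat Λ3 B f y < c) ∧
    (∀ y : ℝ → ℝ, (∀ s, y s ∈ Set.Ioo Λ1 Λmax) → Differentiable ℝ y → StrictMono y →
      Tendsto y atBot (nhds Λ1) → Tendsto y atTop (nhds Λmax) →
      ∀ s0 : ℝ, y s0 = Λ3 →
        (∀ s, 0 < Real.sqrt (2 * (c - H2hat Λ3 B f (y s)))) ∧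
        StrictMonoOn (fun s => Real.sqrt (2 * (c - H2hat Λ3 B f (y s)))) (Set.Iic s0) ∧
        StrictAntiOn (fun s => Real.sqrt (2 * (c - H2hat Λ3 B f (y s)))) (Set.Ici s0) ∧
        Tendsto (fun s => Real.sqrt (2 * (c - H2hat Λ3 B f (y s)))) atBot (nhds 0) ∧
        Tendsto (fun s => Real.sqrt (2 * (c - H2hat Λ3 B f (y s)))) atTop (nhds 0)) := by
  have hVH : ∀ y ∈ Icc (Λ2 + ε) (Λ2 + 2 * ε), quadraticWell Λ3 B y ≤ H2 y := fun y hy ↦ by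
    simp only [quadraticWell, H2]
    linarith [hB y hy]
  obtain ⟨henergy, hradius⟩ := stmt_18_general (ι := ℝ) hΛ1.le (by linarith) (by linarith)
    (by linarith) hVH (hfmono.monotoneOn _) hf0 hf1 hc hΛmax
  exact ⟨henergy, fun y hy _ ↦ hradius y hy⟩
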